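/- Let 𝒜 be an alphabet with δ = δ_𝒜 > 1/2 and A = max 𝒜. Then for every real x ≥ 4A² one has (1/(32A⁴))·x^{2δ} ≤ F_𝒜(x) − F_𝒜(x/(4A²)) ≤ F_𝒜(x) ≤ 8·x^{2δ}. -/

import Mathlib

open Real Filter

noncomputable section

/-- The continuant `⟨d₁,…,d_k⟩`, with `⟨⟩ = 1`, satisfying
`⟨d₁,…,d_k⟩ = d₁·⟨d₂,…,d_k⟩ + ⟨d₃,…,d_k⟩`. -/
def cont : List ℕ → ℕ
  | [] => 1
  | [d] => d
  | d :: e :: l => d * cont (e :: l) + cont l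

/-- The value of the finite continued fraction `[d₁,…,d_k] = ⟨d₂,…,d_k⟩ / ⟨d₁,…,d_k⟩`. -/
def cfVal (l : List ℕ) : ℝ := (cont l.tail : ℝ) / (cont l : ℝ)

/-- The set `E_𝒜` of values of infinite continued fractions `[0; d₁, d₂, …]`
with all partial quotients in `𝒜`. -/
def cfSet (A : Finset ℕ) : Set ℝ :=
  {x | ∃ d : ℕ → ℕ, (∀ i, d i ∈ A) ∧
    Tendsto (fun k => cfVal ((List.range k).map d)) atTop (nhds x)}

/-- `δ_𝒜`, the Hausdorff dimension of `E_𝒜` (as a real number). -/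
def hdim (A : Finset ℕ) : ℝ := (dimH (cfSet A)).toReal

/-- `F_𝒜(x)`: the number of finite sequences with entries in `𝒜` whose continuant
is at most `x`. -/
def FF (A : Finset ℕ) (x : ℝ) : ℕ :=
  Set.ncard {l : List ℕ | l ≠ [] ∧ (∀ d ∈ l, d ∈ A) ∧ (cont l : ℝ) ≤ x}

/-!
Prepending a word `w` to a continued fraction is a Möbius map, which contracts distances by a factor
between `⟨w⟩⁻²` and `(⟨w⟩ + ⟨w'⟩)⁻²`, where `w'` is `w` without its last letter; the two differ by
at most a factor `4`. If every infinite sequence over the alphabet starts with a word of the finite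
set `W`, the images of `E_𝒜` under the maps of `W` cover `E_𝒜`, so that
`∑ w ∈ W, ⟨w⟩ ^ (-2δ) ≥ 1`. If no word of `W` is a prefix of another, these images are separated and
concatenations of words of `W` code a subset of `E_𝒜`, so that `∑ w ∈ W, (⟨w⟩ + ⟨w'⟩) ^ (-2δ) ≤ 1`.

A word extended by two letters at least doubles `⟨w⟩ + ⟨w'⟩`, so each dyadic layer of words consists
of two such prefix-free sets, and summing over the layers bounds `F_𝒜` from above. Conversely, the
longest initial segments with continuant at most `x` meet every infinite sequence, and their
continuants exceed `x / (max 𝒜 + 1)`, which bounds `F_𝒜` from below.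
-/

/-! ### Continuants and Möbius maps -/

/-- The Möbius map `t ↦ [0; d₁, …, d_{k-1}, d_k + t]` attached to the word `d₁ … d_k`. -/
def cfMap : List ℕ → ℝ → ℝ
  | [], t => t
  | d :: l, t => 1 / (d + cfMap l t)

/-- The continuant `⟨d₁, …, d_{k-1}, d_k + t⟩`, which is the denominator of `cfMap l t`. At `t = 0`
it is `cont l`; at `t = 1` it is the sum of the last two convergent denominators. -/
def contAt : List ℕ → ℝ → ℝ
  | [], _ => 1
  | [d], t => d + t
  | d :: e :: l, t => d * contAt (e :: l) t + contAt l t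

section Words

variable {l w u : List ℕ} {t t' : ℝ}

@[simp]
theorem cfMap_nil (t : ℝ) : cfMap [] t = t := rfl

@[simp]
theorem cfMap_cons (d : ℕ) (l : List ℕ) (t : ℝ) : cfMap (d :: l) t = 1 / (d + cfMap l t) := rfl

theorem cfMap_append (w u : List ℕ) (t : ℝ) : cfMap (w ++ u) t = cfMap w (cfMap u t) := by
  induction w with
  | nil => rfl
  | cons d w ih => rw [List.cons_append, cfMap_cons, cfMap_cons, ih]

theorem cfMap_nonneg (l : List ℕ) (ht : 0 ≤ t) : 0 ≤ cfMap l t := by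
  induction l with
  | nil => exact ht
  | cons d l ih => rw [cfMap_cons]; positivity

theorem cfMap_mem_Icc (hl : ∀ d ∈ l, 0 < d) (ht : t ∈ Set.Icc 0 1) : cfMap l t ∈ Set.Icc 0 1 := by
  refine ⟨cfMap_nonneg l ht.1, ?_⟩
  cases l with
  | nil => exact ht.2
  | cons d l =>
    have hd : (1 : ℝ) ≤ d := mod_cast hl d List.mem_cons_self
    have := cfMap_nonneg l ht.1
    rw [cfMap_cons, div_le_one (by linarith)]
    linarith

theorem contAt_zero (l : List ℕ) : contAt l 0 = cont l := by
  induction l using cont.induct with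
  | case1 => simp [contAt, cont]
  | case2 d => simp [contAt, cont]
  | case3 d e l ih₁ ih₂ => simp [contAt, cont, ih₁, ih₂]

theorem contAt_eq_interpolation (l : List ℕ) (t : ℝ) :
    contAt l t = (1 - t) * cont l + t * contAt l 1 := by
  induction l using cont.induct with
  | case1 => simp [contAt, cont]
  | case2 d => simp only [contAt, cont]; ring
  | case3 d e l ih₁ ih₂ => simp only [contAt, cont, ih₁, ih₂]; push_cast; ring

theorem one_le_cont (hl : ∀ d ∈ l, 0 < d) : 1 ≤ cont l := by
  induction l using cont.induct with
  | case1 => exact le_rfl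
  | case2 d => exact hl d List.mem_cons_self
  | case3 d e l _ ih₂ =>
    have := ih₂ fun a ha => hl a (by simp [ha])
    rw [cont]
    omega

theorem cont_pos (hl : ∀ d ∈ l, 0 < d) : (0 : ℝ) < cont l := mod_cast one_le_cont hl

theorem length_lt_two_mul_cont (hl : ∀ d ∈ l, 0 < d) : l.length < 2 * cont l := by
  induction l using cont.induct with
  | case1 => simp [cont]
  | case2 d => have := hl d List.mem_cons_self; simp [cont]; omega
  | case3 d e l ih₁ _ =>
    obtain ⟨hd, hel⟩ := List.forall_mem_cons.1 hl
    have h₁ := ih₁ hel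
    have h₂ := one_le_cont (List.forall_mem_cons.1 hel).2
    have h₃ : cont (e :: l) ≤ d * cont (e :: l) := Nat.le_mul_of_pos_left _ hd
    rw [cont, List.length_cons]
    omega

theorem cont_le_contAt_one (l : List ℕ) : (cont l : ℝ) ≤ contAt l 1 := by
  induction l using cont.induct with
  | case1 => simp [contAt, cont]
  | case2 d => simp [contAt, cont]
  | case3 d e l ih₁ ih₂ => simp only [contAt, cont]; push_cast; gcongr

theorem contAt_one_le_two_mul_cont (hl : ∀ d ∈ l, 0 < d) : contAt l 1 ≤ 2 * cont l := by
  induction l using cont.induct with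
  | case1 => simp [contAt, cont]
  | case2 d =>
    have : (1 : ℝ) ≤ d := mod_cast hl d List.mem_cons_self
    simp only [contAt, cont]
    linarith
  | case3 d e l ih₁ ih₂ =>
    obtain ⟨-, hel⟩ := List.forall_mem_cons.1 hl
    calc d * contAt (e :: l) 1 + contAt l 1
        ≤ d * (2 * cont (e :: l)) + 2 * cont l := by
          gcongr
          exacts [ih₁ hel, ih₂ (List.forall_mem_cons.1 hel).2]
      _ = 2 * cont (d :: e :: l) := by simp only [cont]; push_cast; ring

theorem two_le_contAt_one (hl : ∀ d ∈ l, 0 < d) (hne : l ≠ []) : 2 ≤ contAt l 1 := by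
  match l with
  | [] => contradiction
  | [d] =>
    have : (1 : ℝ) ≤ d := mod_cast hl d List.mem_cons_self
    simp only [contAt]
    linarith
  | d :: e :: l =>
    obtain ⟨hd, hel⟩ := List.forall_mem_cons.1 hl
    have hl' := (List.forall_mem_cons.1 hel).2
    have h₀ : (1 : ℝ) ≤ d := mod_cast hd
    have h₁ : (1 : ℝ) ≤ cont (e :: l) := mod_cast one_le_cont hel
    have h₂ : (1 : ℝ) ≤ cont l := mod_cast one_le_cont hl'
    have h₃ := cont_le_contAt_one (e :: l)
    have h₄ := cont_le_contAt_one l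
    simp only [contAt]
    nlinarith

theorem cont_le_contAt (l : List ℕ) (ht : 0 ≤ t) : cont l ≤ contAt l t := by
  nlinarith [contAt_eq_interpolation l t, cont_le_contAt_one l]

theorem contAt_le_contAt_one (l : List ℕ) (ht : t ≤ 1) : contAt l t ≤ contAt l 1 := by
  nlinarith [contAt_eq_interpolation l t, cont_le_contAt_one l]

theorem contAt_pos (hl : ∀ d ∈ l, 0 < d) (ht : 0 ≤ t) : 0 < contAt l t :=
  (cont_pos hl).trans_le (cont_le_contAt l ht)

theorem contAt_cons (d : ℕ) (hl : ∀ e ∈ l, 0 < e) (ht : 0 ≤ t) :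
    contAt (d :: l) t = (d + cfMap l t) * contAt l t := by
  induction l generalizing d with
  | nil => simp [contAt]
  | cons e l ih =>
    obtain ⟨he, hl'⟩ := List.forall_mem_cons.1 hl
    have : (0 : ℝ) < e := mod_cast he
    have := cfMap_nonneg l ht
    rw [contAt, ih e hl', cfMap_cons]
    field_simp

theorem contAt_append (hw : ∀ d ∈ w, 0 < d) (hu : ∀ d ∈ u, 0 < d) (ht : 0 ≤ t) :
    contAt (w ++ u) t = contAt w (cfMap u t) * contAt u t := by
  induction w with
  | nil => simp [contAt]
  | cons d w ih =>
    have hw' := (List.forall_mem_cons.1 hw).2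
    rw [List.cons_append, contAt_cons d (List.forall_mem_append.2 ⟨hw', hu⟩) ht, ih hw',
      contAt_cons d hw' (cfMap_nonneg u ht), cfMap_append, mul_assoc]

theorem cfMap_mul_contAt (hl : ∀ d ∈ l, 0 < d) (hne : l ≠ []) (ht : 0 ≤ t) :
    cfMap l t * contAt l t = contAt l.tail t := by
  cases l with
  | nil => contradiction
  | cons d l =>
    obtain ⟨hd, hl'⟩ := List.forall_mem_cons.1 hl
    have : (0 : ℝ) < d := mod_cast hd
    have := cfMap_nonneg l ht
    rw [contAt_cons d hl' ht, cfMap_cons, List.tail_cons]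
    field_simp

theorem cfVal_eq_cfMap_zero (hl : ∀ d ∈ l, 0 < d) (hne : l ≠ []) : cfVal l = cfMap l 0 := by
  rw [cfVal, div_eq_iff (cont_pos hl).ne', ← contAt_zero, ← contAt_zero,
    cfMap_mul_contAt hl hne le_rfl]

theorem contAt_one_mul_contAt_tail_le (hw : ∀ d ∈ w, 0 < d) (hu : ∀ d ∈ u, 0 < d) (hne : u ≠ [])
    (ht : t ∈ Set.Icc 0 1) : contAt w 1 * contAt u.tail t ≤ contAt (w ++ u) t := by
  have hv := cfMap_mem_Icc hu ht
  have hv' : contAt w 1 * cfMap u t ≤ contAt w (cfMap u t) := by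
    rw [contAt_eq_interpolation w (cfMap u t), mul_comm]
    exact le_add_of_nonneg_left (mul_nonneg (sub_nonneg.2 hv.2) (Nat.cast_nonneg _))
  rw [contAt_append hw hu ht.1, ← cfMap_mul_contAt hu hne ht.1, ← mul_assoc]
  exact mul_le_mul_of_nonneg_right hv' (contAt_pos hu ht.1).le

theorem contAt_one_le_cont_append (hw : ∀ d ∈ w, 0 < d) (hu : ∀ d ∈ u, 0 < d) (hne : u ≠ []) :
    contAt w 1 ≤ cont (w ++ u) := by
  have htail : (1 : ℝ) ≤ contAt u.tail 0 := by
    rw [contAt_zero]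
    exact_mod_cast one_le_cont fun d hd => hu d (List.mem_of_mem_tail hd)
  rw [← contAt_zero]
  exact (le_mul_of_one_le_right (contAt_pos hw zero_le_one).le htail).trans
    (contAt_one_mul_contAt_tail_le hw hu hne ⟨le_rfl, zero_le_one⟩)

theorem two_mul_contAt_one_le_append (hw : ∀ d ∈ w, 0 < d) (hu : ∀ d ∈ u, 0 < d)
    (hlen : 2 ≤ u.length) : 2 * contAt w 1 ≤ contAt (w ++ u) 1 := by
  have hne : u ≠ [] := List.ne_nil_of_length_pos (by omega)
  have htail : 2 ≤ contAt u.tail 1 :=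
    two_le_contAt_one (fun d hd => hu d (List.mem_of_mem_tail hd))
      (List.ne_nil_of_length_pos (by rw [List.length_tail]; omega))
  rw [mul_comm]
  exact (mul_le_mul_of_nonneg_left htail (contAt_pos hw zero_le_one).le).trans
    (contAt_one_mul_contAt_tail_le hw hu hne ⟨zero_le_one, le_rfl⟩)

theorem cont_concat_le {a : ℕ} (hw : ∀ d ∈ w, 0 < d) (ha : 0 < a) :
    (cont (w ++ [a]) : ℝ) ≤ (a + 1) * cont w := by
  have : (0 : ℝ) < a := mod_cast ha
  calc (cont (w ++ [a]) : ℝ) = contAt w (1 / a) * a := by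
        rw [← contAt_zero, contAt_append hw (by simpa using ha) le_rfl]
        simp [contAt]
    _ = (a - 1) * cont w + contAt w 1 := by rw [contAt_eq_interpolation]; field_simp
    _ ≤ (a - 1) * cont w + 2 * cont w := by gcongr; exact contAt_one_le_two_mul_cont hw
    _ = (a + 1) * cont w := by ring

theorem dist_cfMap_mul_contAt (hl : ∀ d ∈ l, 0 < d) (ht : 0 ≤ t) (ht' : 0 ≤ t') :
    dist (cfMap l t) (cfMap l t') * (contAt l t * contAt l t') = dist t t' := by
  induction l with
  | nil => simp [contAt]
  | cons d l ih =>
    obtain ⟨hd, hl'⟩ := List.forall_mem_cons.1 hl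
    have hx : 0 < d + cfMap l t := add_pos_of_pos_of_nonneg (mod_cast hd) (cfMap_nonneg l ht)
    have hy : 0 < d + cfMap l t' := add_pos_of_pos_of_nonneg (mod_cast hd) (cfMap_nonneg l ht')
    rw [← ih hl', contAt_cons d hl' ht, contAt_cons d hl' ht', cfMap_cons, cfMap_cons, one_div,
      one_div, dist_inv_inv₀ hx.ne' hy.ne', dist_add_left, Real.norm_of_nonneg hx.le,
      Real.norm_of_nonneg hy.le]
    field_simp

theorem dist_cfMap_le (hl : ∀ d ∈ l, 0 < d) (ht : 0 ≤ t) (ht' : 0 ≤ t') :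
    dist (cfMap l t) (cfMap l t') ≤ ((cont l : ℝ) ^ 2)⁻¹ * dist t t' := by
  have hpos := cont_pos hl
  have := contAt_pos hl ht
  rw [← dist_cfMap_mul_contAt hl ht ht', le_inv_mul_iff₀ (by positivity), sq, mul_comm]
  gcongr
  exacts [cont_le_contAt l ht, cont_le_contAt l ht']

theorem le_dist_cfMap (hl : ∀ d ∈ l, 0 < d) (ht : t ∈ Set.Icc 0 1) (ht' : t' ∈ Set.Icc 0 1) :
    (contAt l 1 ^ 2)⁻¹ * dist t t' ≤ dist (cfMap l t) (cfMap l t') := by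
  have hpos := contAt_pos hl zero_le_one
  rw [← dist_cfMap_mul_contAt hl ht.1 ht'.1, inv_mul_le_iff₀ (by positivity), sq, mul_comm]
  have := contAt_pos hl ht'.1
  gcongr
  exacts [contAt_le_contAt_one l ht.2, contAt_le_contAt_one l ht'.2]

end Words

open scoped NNReal ENNReal Stream'

/-! ### Hausdorff dimension bounds from iterated maps -/

section Covering

variable {X ι : Type*} [EMetricSpace X] {E : Set X} {f : ι → X → X} {ρ : ι → ℝ≥0}

theorem exists_iterated_cover (hf : ∀ i, LipschitzOnWith (ρ i) (f i) E)
    (hE : E ⊆ ⋃ i, f i '' E) (n : ℕ) :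
    ∃ t : (Fin n → ι) → Set X,
      E ⊆ ⋃ v, t v ∧ ∀ v, Metric.ediam (t v) ≤ (∏ k, ρ (v k)) * Metric.ediam E := by
  induction n with
  | zero => exact ⟨fun _ => E, Set.subset_iUnion_of_subset Fin.elim0 le_rfl, by simp⟩
  | succ n ih =>
    obtain ⟨t, ht, hdiam⟩ := ih
    refine ⟨fun v => f (v 0) '' (t (Fin.tail v) ∩ E), fun x hx => ?_, fun v => ?_⟩
    · obtain ⟨i, y, hy, rfl⟩ := Set.mem_iUnion.1 (hE hx)
      obtain ⟨v, hv⟩ := Set.mem_iUnion.1 (ht hy)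
      exact Set.mem_iUnion.2 ⟨Fin.cons i v, y, by simpa using ⟨hv, hy⟩, by simp⟩
    · rw [Metric.ediam_image_le_iff]
      intro x hx y hy
      calc edist (f (v 0) x) (f (v 0) y)
          ≤ ρ (v 0) * edist x y := hf _ hx.2 hy.2
        _ ≤ ρ (v 0) * ((∏ k, ρ (Fin.tail v k)) * Metric.ediam E) := by
          gcongr
          exact (Metric.edist_le_ediam_of_mem hx.1 hy.1).trans (hdiam _)
        _ = (∏ k, ρ (v k)) * Metric.ediam E := by
          rw [Fin.prod_univ_succ, ENNReal.coe_mul, mul_assoc]; rfl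

theorem dimH_le_of_subset_iUnion_image [Fintype ι] {s : ℝ≥0} (hs : 0 < s)
    (hdiam : Metric.ediam E ≠ ∞) (hf : ∀ i, LipschitzOnWith (ρ i) (f i) E)
    (hE : E ⊆ ⋃ i, f i '' E) (hsum : ∑ i, ρ i ^ (s : ℝ) < 1) : dimH E ≤ s := by
  borelize X
  choose t ht hρ using exists_iterated_cover hf hE
  let σ : ℕ → ℝ≥0∞ := fun n => ∑ v, Metric.ediam (t n v) ^ (s : ℝ)
  have hσ_le (n : ℕ) : σ n ≤ ↑((∑ i, ρ i ^ (s : ℝ)) ^ n) * Metric.ediam E ^ (s : ℝ) := by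
    rw [Fintype.sum_pow, ENNReal.ofNNReal_finsetSum, Finset.sum_mul]
    refine Finset.sum_le_sum fun v _ => ?_
    rw [NNReal.finsetProd_rpow, ENNReal.coe_rpow_of_nonneg _ s.coe_nonneg,
      ← ENNReal.mul_rpow_of_nonneg _ _ s.coe_nonneg]
    exact ENNReal.rpow_le_rpow (hρ n v) s.coe_nonneg
  have hσ : Tendsto σ atTop (nhds 0) := by
    have hpow := ENNReal.tendsto_coe.2 (NNReal.tendsto_pow_atTop_nhds_zero_of_lt_one hsum)
    have hmul := ENNReal.Tendsto.mul_const (b := Metric.ediam E ^ (s : ℝ)) hpow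
      (.inr (ENNReal.rpow_ne_top_of_nonneg s.coe_nonneg hdiam))
    rw [ENNReal.coe_zero, zero_mul] at hmul
    exact tendsto_of_tendsto_of_tendsto_of_le_of_le tendsto_const_nhds hmul
      (fun _ => zero_le) hσ_le
  have hmesh : Tendsto (fun n => σ n ^ (s : ℝ)⁻¹) atTop (nhds 0) := by
    have := hσ.ennrpow_const (s : ℝ)⁻¹
    rwa [ENNReal.zero_rpow_of_pos (by positivity)] at this
  have hle (n : ℕ) (v : Fin n → ι) : Metric.ediam (t n v) ≤ σ n ^ (s : ℝ)⁻¹ :=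
    (ENNReal.le_rpow_inv_iff (by positivity)).2
      (Finset.single_le_sum (f := fun v => Metric.ediam (t n v) ^ (s : ℝ))
        (fun _ _ => zero_le) (Finset.mem_univ v))
  have hμ := MeasureTheory.Measure.hausdorffMeasure_le_liminf_sum s E _ hmesh t
    (.of_forall hle) (.of_forall ht)
  rw [hσ.liminf_eq] at hμ
  exact dimH_le_of_hausdorffMeasure_ne_top (ne_top_of_le_ne_top ENNReal.zero_ne_top hμ)

end Covering

section Coding

variable {ι X Y : Type*}

theorem mul_dimH_univ_le_dimH_range [MetricSpace X] [MetricSpace Y] {g : Y → X} {C t : ℝ≥0}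
    (ht : 0 < t) (h : ∀ x y, dist x y ≤ C * dist (g x) (g y) ^ (t : ℝ)) :
    t * dimH (Set.univ : Set Y) ≤ dimH (Set.range g) := by
  cases isEmpty_or_nonempty Y
  · simp [Set.univ_eq_empty_iff.2 ‹_›]
  have hg : Function.Injective g := fun x y hxy => dist_le_zero.1 <| by
    simpa [hxy, Real.zero_rpow (NNReal.coe_pos.2 ht).ne'] using h x y
  have hinv : HolderOnWith C t (Function.invFun g) (Set.range g) := by
    rintro _ ⟨x, rfl⟩ _ ⟨y, rfl⟩
    rw [Function.leftInverse_invFun hg, Function.leftInverse_invFun hg, edist_dist, edist_dist,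
      ENNReal.ofReal_rpow_of_nonneg dist_nonneg t.coe_nonneg, ← ENNReal.ofReal_coe_nnreal,
      ← ENNReal.ofReal_mul C.coe_nonneg]
    exact ENNReal.ofReal_le_ofReal (h x y)
  have himage : Function.invFun g '' Set.range g = Set.univ := by
    rw [← Set.range_comp, (Function.leftInverse_invFun hg).comp_eq_id, Set.range_id]
  have := hinv.dimH_image_le ht
  rwa [himage, ENNReal.le_div_iff_mul_le (.inl (mod_cast ht.ne')) (.inl ENNReal.coe_ne_top),
    mul_comm] at this

theorem exists_forall_mem_Ico_of_lt_sum (s : Finset ι) (p : ι → ℝ) :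
    ∃ c : ι → ℝ, ∀ y, 0 ≤ y → y < ∑ i ∈ s, p i → ∃ i ∈ s, y ∈ Set.Ico (c i) (c i + p i) := by
  classical
  induction s using Finset.induction_on with
  | empty => exact ⟨0, fun y hy hlt => absurd hlt (by simpa using hy)⟩
  | insert a s ha ih =>
    obtain ⟨c, hc⟩ := ih
    refine ⟨Function.update c a (∑ i ∈ s, p i), fun y hy hlt => ?_⟩
    rw [Finset.sum_insert ha, add_comm] at hlt
    rcases lt_or_ge y (∑ i ∈ s, p i) with hys | hys
    · obtain ⟨i, hi, hyi⟩ := hc y hy hys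
      exact ⟨i, Finset.mem_insert_of_mem hi,
        by rwa [Function.update_of_ne (ne_of_mem_of_not_mem hi ha)]⟩
    · exact ⟨a, Finset.mem_insert_self a s, by simpa using ⟨hys, hlt⟩⟩

theorem exists_piecewise_expanding_map [Fintype ι] {p : ι → ℝ} (hp : ∀ i, 0 < p i)
    (hsum : 1 ≤ ∑ i, p i) :
    ∃ (branch : Set.Ico (0 : ℝ) 1 → ι) (T : Set.Ico (0 : ℝ) 1 → Set.Ico (0 : ℝ) 1),
      ∀ x y, branch x = branch y → dist x y = p (branch x) * dist (T x) (T y) := by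
  obtain ⟨c, hc⟩ := exists_forall_mem_Ico_of_lt_sum Finset.univ p
  choose branch _ hbranch using
    fun y : Set.Ico (0 : ℝ) 1 => hc y y.2.1 (y.2.2.trans_le hsum)
  have hrescale (y : Set.Ico (0 : ℝ) 1) :
      (y - c (branch y)) / p (branch y) ∈ Set.Ico (0 : ℝ) 1 := by
    obtain ⟨hle, hlt⟩ := hbranch y
    exact ⟨div_nonneg (sub_nonneg.2 hle) (hp _).le,
      (div_lt_one (hp _)).2 (sub_lt_iff_lt_add'.2 hlt)⟩
  refine ⟨branch, fun y => ⟨_, hrescale y⟩, fun x y hxy => ?_⟩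
  simp only [Subtype.dist_eq, Real.dist_eq]
  rw [hxy, ← sub_div, sub_sub_sub_cancel_right, abs_div, abs_of_pos (hp _),
    mul_div_cancel₀ _ (hp _).ne']

variable [PseudoMetricSpace X] {code : Stream' ι → X} {r : ι → ℝ} {κ t : ℝ}

theorem dist_le_dist_itinerary_rpow_add_pow [PseudoMetricSpace Y] {branch : Y → ι} {T : Y → Y}
    {ρ : ℝ} (hr : ∀ i, 0 < r i) (hκ : 0 < κ) (ht : 0 < t) (hρ : ∀ i, r i ^ t ≤ ρ)
    (hcons : ∀ i s s', r i * dist (code s) (code s') ≤ dist (code (i :: s)) (code (i :: s')))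
    (hsep : ∀ i j s s', i ≠ j → κ ≤ dist (code (i :: s)) (code (j :: s')))
    (hY : ∀ x y : Y, dist x y ≤ 1)
    (hT : ∀ x y, branch x = branch y → dist x y = r (branch x) ^ t * dist (T x) (T y))
    (n : ℕ) (x y : Y) :
    dist x y ≤
      (dist (code (Stream'.corec branch T x)) (code (Stream'.corec branch T y)) / κ) ^ t
        + ρ ^ n := by
  have hρ₀ : 0 ≤ ρ := (Real.rpow_nonneg (hr (branch x)).le t).trans (hρ _)
  induction n generalizing x y with
  | zero =>
    rw [pow_zero]
    exact (hY x y).trans (le_add_of_nonneg_left (by positivity))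
  | succ n ih =>
    rw [Stream'.corec_eq branch T x, Stream'.corec_eq branch T y]
    by_cases hxy : branch x = branch y
    · rw [hT x y hxy, hxy]
      set i := branch y
      have hri := hr i
      calc r i ^ t * dist (T x) (T y)
          ≤ r i ^ t * (_ + ρ ^ n) := by gcongr; exact ih (T x) (T y)
        _ = (r i * dist _ _ / κ) ^ t + r i ^ t * ρ ^ n := by
          rw [mul_add, ← Real.mul_rpow hri.le (by positivity), mul_div_assoc]
        _ ≤ _ := by
          rw [pow_succ']
          gcongr
          exacts [hcons i _ _, hρ i]
    · refine (hY x y).trans (le_add_of_le_of_nonneg ?_ (by positivity))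
      exact Real.one_le_rpow ((one_le_div hκ).2 (hsep _ _ _ _ hxy)) ht.le

end Coding

theorem dimH_univ_Ico_zero_one : dimH (Set.univ : Set (Set.Ico (0 : ℝ) 1)) = 1 := by
  rw [← isometry_subtype_coe.dimH_image, Set.image_univ, Subtype.range_coe,
    Real.dimH_of_nonempty_interior (by simp), Module.finrank_self, Nat.cast_one]

theorem le_dimH_range_of_one_le_sum_rpow {ι X : Type*} [Fintype ι] [MetricSpace X]
    {code : Stream' ι → X} {r : ι → ℝ} {κ : ℝ} {t : ℝ≥0} (hr : ∀ i, r i ∈ Set.Ioo 0 1)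
    (hκ : 0 < κ) (ht : 0 < t)
    (hcons : ∀ i s s', r i * dist (code s) (code s') ≤ dist (code (i :: s)) (code (i :: s')))
    (hsep : ∀ i j s s', i ≠ j → κ ≤ dist (code (i :: s)) (code (j :: s')))
    (hsum : 1 ≤ ∑ i, r i ^ (t : ℝ)) : (t : ℝ≥0∞) ≤ dimH (Set.range code) := by
  -- Cut `[0, 1)` into intervals of length at most `r i ^ t`, each stretched over `[0, 1)`. Sending
  -- a point to the code of its itinerary has a `t`-Hölder inverse.
  obtain ⟨branch, T, hT⟩ :=
    exists_piecewise_expanding_map (fun i => Real.rpow_pos_of_pos (hr i).1 t) hsum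
  have : Nonempty ι := ⟨branch ⟨0, by simp⟩⟩
  obtain ⟨m, hm⟩ := Finite.exists_max r
  let g (y : Set.Ico (0 : ℝ) 1) : X := code (Stream'.corec branch T y)
  have hY (x y : Set.Ico (0 : ℝ) 1) : dist x y ≤ 1 :=
    Real.dist_le_of_mem_Icc_01 (Set.Ico_subset_Icc_self x.2) (Set.Ico_subset_Icc_self y.2)
  have hdist (x y : Set.Ico (0 : ℝ) 1) (n : ℕ) :
      dist x y ≤ (dist (g x) (g y) / κ) ^ (t : ℝ) + (r m ^ (t : ℝ)) ^ n :=
    dist_le_dist_itinerary_rpow_add_pow (fun i => (hr i).1) hκ ht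
      (fun i => Real.rpow_le_rpow (hr i).1.le (hm i) t.2) hcons hsep hY hT n x y
  have hlim : Tendsto (fun n : ℕ => (r m ^ (t : ℝ)) ^ n) atTop (nhds 0) :=
    tendsto_pow_atTop_nhds_zero_of_lt_one (Real.rpow_nonneg (hr m).1.le t)
      (Real.rpow_lt_one (hr m).1.le (hr m).2 ht)
  have hholder (x y : Set.Ico (0 : ℝ) 1) :
      dist x y ≤ ((κ ^ (t : ℝ))⁻¹.toNNReal : ℝ≥0) * dist (g x) (g y) ^ (t : ℝ) := by
    rw [Real.coe_toNNReal _ (by positivity), inv_mul_eq_div,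
      ← Real.div_rpow dist_nonneg hκ.le]
    exact ge_of_tendsto' (by simpa using hlim.const_add _) (hdist x y)
  calc (t : ℝ≥0∞) = t * dimH (Set.univ : Set (Set.Ico (0 : ℝ) 1)) := by
        rw [dimH_univ_Ico_zero_one, mul_one]
    _ ≤ dimH (Set.range g) := mul_dimH_univ_le_dimH_range ht hholder
    _ ≤ dimH (Set.range code) := dimH_mono (Set.range_comp_subset_range _ code)

/-! ### Infinite continued fractions -/

/-- The value `[0; s₀, s₁, …]` of an infinite continued fraction, as the limit of its convergents.
It is a genuine limit when all partial quotients are positive (`tendsto_cfMap_take`). -/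
def cfLim (s : Stream' ℕ) : ℝ := limUnder atTop fun n => cfMap (s.take n) 0

section Streams

variable {α : Type*} {s : Stream' ℕ} {w v : List ℕ} {M : ℕ} {t t' : ℝ}

theorem mem_of_mem_stream_take {s : Stream' α} {n : ℕ} {a : α} (ha : a ∈ s.take n) : a ∈ s := by
  rw [← Stream'.append_take_drop n s]
  exact Stream'.mem_append_stream_left _ ha

theorem mem_of_mem_stream_drop {s : Stream' α} {n : ℕ} {a : α} (ha : a ∈ s.drop n) : a ∈ s := by
  rw [← Stream'.append_take_drop n s]
  exact Stream'.mem_append_stream_right _ ha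

theorem mem_of_mem_append_stream {l : List α} {s : Stream' α} {a : α} (ha : a ∈ l ++ₛ s) :
    a ∈ l ∨ a ∈ s := by
  induction l with
  | nil => exact .inr ha
  | cons b l ih =>
    rw [List.mem_cons, or_assoc]
    exact (Stream'.eq_or_mem_of_mem_cons ha).imp_right ih

theorem map_range_get (s : Stream' α) (n : ℕ) : (List.range n).map s.get = s.take n := by
  induction n with
  | zero => rfl
  | succ n ih => rw [List.range_succ, List.map_append, ih, List.map_singleton, Stream'.take_succ']

theorem inv_cont_sq_le (hw : ∀ d ∈ w, 0 < d) :
    ((cont w : ℝ) ^ 2)⁻¹ ≤ 2 * (1 / ((w.length : ℝ) + 1)) := by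
  have hlen : (w.length : ℝ) + 1 ≤ 2 * cont w := mod_cast length_lt_two_mul_cont hw
  have hone : (1 : ℝ) ≤ cont w := mod_cast one_le_cont hw
  rw [mul_one_div, inv_le_iff_one_le_mul₀ (by positivity), div_mul_eq_mul_div,
    one_le_div (by positivity)]
  nlinarith

theorem tendsto_cfMap_take (hs : ∀ d ∈ s, 0 < d) :
    Tendsto (fun n => cfMap (s.take n) 0) atTop (nhds (cfLim s)) := by
  refine (cauchySeq_of_le_tendsto_0' (fun n : ℕ => 2 * (1 / ((n : ℝ) + 1))) (fun n m hnm => ?_)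
    (by simpa using tendsto_one_div_add_atTop_nhds_zero_nat.const_mul (2 : ℝ))).tendsto_limUnder
  obtain ⟨k, rfl⟩ := Nat.exists_eq_add_of_le hnm
  have htake : ∀ d ∈ s.take n, 0 < d := fun d hd => hs d (mem_of_mem_stream_take hd)
  have hrest := cfMap_mem_Icc (l := (s.drop n).take k)
    (fun d hd => hs d (mem_of_mem_stream_drop (mem_of_mem_stream_take hd)))
    (Set.left_mem_Icc.2 zero_le_one)
  rw [Stream'.take_add, cfMap_append]
  calc dist (cfMap (s.take n) 0) (cfMap (s.take n) (cfMap ((s.drop n).take k) 0))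
      ≤ ((cont (s.take n) : ℝ) ^ 2)⁻¹ * dist 0 (cfMap ((s.drop n).take k) 0) :=
        dist_cfMap_le htake le_rfl hrest.1
    _ ≤ ((cont (s.take n) : ℝ) ^ 2)⁻¹ * 1 := by
        gcongr
        exact Real.dist_le_of_mem_Icc_01 (Set.left_mem_Icc.2 zero_le_one) hrest
    _ ≤ 2 * (1 / ((n : ℝ) + 1)) := by simpa using inv_cont_sq_le htake

theorem cfLim_mem_Icc (hs : ∀ d ∈ s, 0 < d) : cfLim s ∈ Set.Icc 0 1 :=
  isClosed_Icc.mem_of_tendsto (tendsto_cfMap_take hs) <| .of_forall fun _ =>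
    cfMap_mem_Icc (fun d hd => hs d (mem_of_mem_stream_take hd)) (Set.left_mem_Icc.2 zero_le_one)

theorem cfLim_append (hw : ∀ d ∈ w, 0 < d) (hs : ∀ d ∈ s, 0 < d) :
    cfLim (w ++ₛ s) = cfMap w (cfLim s) := by
  have hws : ∀ d ∈ w ++ₛ s, 0 < d := fun d hd => (mem_of_mem_append_stream hd).elim (hw d) (hs d)
  have hshift : Tendsto (fun n => cfMap ((w ++ₛ s).take (w.length + n)) 0) atTop
      (nhds (cfLim (w ++ₛ s))) :=
    (tendsto_cfMap_take hws).comp (tendsto_atTop_mono (fun n => Nat.le_add_left n _) tendsto_id)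
  refine tendsto_nhds_unique hshift ?_
  simp only [← Stream'.append_take, cfMap_append]
  refine tendsto_iff_dist_tendsto_zero.2 (squeeze_zero (fun _ => dist_nonneg) (fun n =>
    dist_cfMap_le hw (cfMap_nonneg _ le_rfl) (cfLim_mem_Icc hs).1) ?_)
  simpa using (tendsto_iff_dist_tendsto_zero.1 (tendsto_cfMap_take hs)).const_mul
    (((cont w : ℝ) ^ 2)⁻¹)

theorem mem_cfSet_iff {A : Finset ℕ} (hA : ∀ a ∈ A, 0 < a) {x : ℝ} :
    x ∈ cfSet A ↔ ∃ s : Stream' ℕ, (∀ a ∈ s, a ∈ A) ∧ cfLim s = x := by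
  have hlim (s : Stream' ℕ) (hs : ∀ a ∈ s, a ∈ A) :
      Tendsto (fun k => cfVal ((List.range k).map s.get)) atTop (nhds (cfLim s)) := by
    have hs' : ∀ d ∈ s, 0 < d := fun d hd => hA d (hs d hd)
    refine (tendsto_cfMap_take hs').congr' ((eventually_gt_atTop 0).mono fun k hk => ?_)
    have hne : s.take k ≠ [] := List.ne_nil_of_length_pos (by simpa using hk)
    simp only [map_range_get]
    rw [cfVal_eq_cfMap_zero (fun d hd => hs' d (mem_of_mem_stream_take hd)) hne]
  have hmem {s : Stream' ℕ} : (∀ a ∈ s, a ∈ A) ↔ ∀ i, s.get i ∈ A := by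
    simp [Stream'.mem_iff_exists_get_eq]
  constructor
  · rintro ⟨d, hd, hx⟩
    exact ⟨d, hmem.2 hd, tendsto_nhds_unique (hlim d (hmem.2 hd)) hx⟩
  · rintro ⟨s, hs, rfl⟩
    exact ⟨s.get, hmem.1 hs, hlim s hs⟩

theorem inv_natCast_add_mem_Icc {a : ℕ} (ha : a ∈ Set.Icc 1 M) (ht : t ∈ Set.Icc 0 1) :
    1 / (a + t) ∈ Set.Icc ((M + 1 : ℝ)⁻¹) 1 := by
  have ha₁ : (1 : ℝ) ≤ a := mod_cast ha.1
  have haM : (a : ℝ) ≤ M := mod_cast ha.2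
  obtain ⟨ht₀, ht₁⟩ := ht
  rw [one_div]
  exact ⟨inv_anti₀ (by linarith) (by linarith), inv_le_one_of_one_le₀ (by linarith)⟩

theorem cfMap_mem_Icc_inv (hw : ∀ d ∈ w, d ∈ Set.Icc 1 M)
    (ht : t ∈ Set.Icc ((M + 1 : ℝ)⁻¹) 1) : cfMap w t ∈ Set.Icc ((M + 1 : ℝ)⁻¹) 1 := by
  cases w with
  | nil => exact ht
  | cons d w =>
    obtain ⟨hd, hw'⟩ := List.forall_mem_cons.1 hw
    exact inv_natCast_add_mem_Icc hd
      (cfMap_mem_Icc (fun e he => (hw' e he).1) ⟨(by positivity : (0 : ℝ) ≤ _).trans ht.1, ht.2⟩)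

theorem cfLim_mem_Icc_inv (hs : ∀ d ∈ s, d ∈ Set.Icc 1 M) :
    cfLim s ∈ Set.Icc ((M + 1 : ℝ)⁻¹) 1 := by
  have hs' : ∀ d ∈ s.drop 1, 0 < d := fun d hd => (hs d (mem_of_mem_stream_drop hd)).1
  have hhead : ∀ d ∈ s.take 1, d ∈ Set.Icc 1 M := fun d hd => hs d (mem_of_mem_stream_take hd)
  rw [← Stream'.append_take_drop 1 s, cfLim_append (fun d hd => (hhead d hd).1) hs']
  exact inv_natCast_add_mem_Icc (hhead _ (List.mem_singleton_self _)) (cfLim_mem_Icc hs')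

theorem inv_sq_mul_dist_le_dist_one_div {a b : ℕ} (ha : a ∈ Set.Icc 1 M) (hb : b ∈ Set.Icc 1 M)
    (ht : t ∈ Set.Icc 0 1) (ht' : t' ∈ Set.Icc 0 1) :
    ((M + 1 : ℝ)⁻¹) ^ 2 * dist (a + t) (b + t') ≤ dist (1 / (a + t)) (1 / (b + t')) := by
  have hx : 0 < a + t := add_pos_of_pos_of_nonneg (mod_cast ha.1) ht.1
  have hy : 0 < b + t' := add_pos_of_pos_of_nonneg (mod_cast hb.1) ht'.1
  rw [one_div, one_div, dist_inv_inv₀ hx.ne' hy.ne', Real.norm_of_nonneg hx.le,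
    Real.norm_of_nonneg hy.le, div_eq_inv_mul, mul_inv, sq, ← one_div (a + t), ← one_div (b + t')]
  gcongr
  exacts [(inv_natCast_add_mem_Icc ha ht).1, (inv_natCast_add_mem_Icc hb ht').1]

theorem inv_le_dist_natCast_add {a b : ℕ} (hab : a ≠ b) (ht : t ∈ Set.Icc ((M + 1 : ℝ)⁻¹) 1)
    (ht' : t' ∈ Set.Icc ((M + 1 : ℝ)⁻¹) 1) : (M + 1 : ℝ)⁻¹ ≤ dist (a + t) (b + t') := by
  obtain ⟨ht₀, ht₁⟩ := ht
  obtain ⟨ht'₀, ht'₁⟩ := ht'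
  rw [Real.dist_eq]
  rcases lt_or_gt_of_ne hab with h | h
  · have : (a : ℝ) + 1 ≤ b := mod_cast h
    exact le_trans (by linarith) (neg_le_abs _)
  · have : (b : ℝ) + 1 ≤ a := mod_cast h
    exact le_trans (by linarith) (le_abs_self _)

theorem inv_pow_le_dist_cfMap (hw : ∀ d ∈ w, d ∈ Set.Icc 1 M) (hv : ∀ d ∈ v, d ∈ Set.Icc 1 M)
    (hwv : ¬ w <+: v) (hvw : ¬ v <+: w) (ht : t ∈ Set.Icc ((M + 1 : ℝ)⁻¹) 1)
    (ht' : t' ∈ Set.Icc ((M + 1 : ℝ)⁻¹) 1) :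
    ((M + 1 : ℝ)⁻¹) ^ (2 * w.length + 1) ≤ dist (cfMap w t) (cfMap v t') := by
  induction w generalizing v with
  | nil => exact absurd List.nil_prefix hwv
  | cons a w ih =>
    rcases v with - | ⟨b, v⟩
    · exact absurd List.nil_prefix hvw
    obtain ⟨ha, hw'⟩ := List.forall_mem_cons.1 hw
    obtain ⟨hb, hv'⟩ := List.forall_mem_cons.1 hv
    have hx := cfMap_mem_Icc_inv hw' ht
    have hy := cfMap_mem_Icc_inv hv' ht'
    have hIcc : Set.Icc ((M + 1 : ℝ)⁻¹) 1 ⊆ Set.Icc 0 1 := Set.Icc_subset_Icc_left (by positivity)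
    refine le_trans ?_ (inv_sq_mul_dist_le_dist_one_div ha hb (hIcc hx) (hIcc hy))
    have hdist : ((M + 1 : ℝ)⁻¹) ^ (2 * w.length + 1) ≤ dist (a + cfMap w t) (b + cfMap v t') := by
      by_cases hab : a = b
      · subst hab
        rw [dist_add_left]
        exact ih hw' hv' (by simpa using hwv) (by simpa using hvw)
      · exact (pow_le_of_le_one (by positivity) (inv_le_one_of_one_le₀ (by simp)) (by simp)).trans
          (inv_le_dist_natCast_add hab hx hy)
    rw [List.length_cons, show 2 * (w.length + 1) + 1 = 2 + (2 * w.length + 1) by ring, pow_add]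
    gcongr

end Streams

/-! ### Bars, antichains and the dimension of `cfSet` -/

/-- The nonempty words over the alphabet `A`. -/
def words (A : Finset ℕ) : Set (List ℕ) := {w | w ≠ [] ∧ ∀ d ∈ w, d ∈ A}

/-- `W` is a bar for the alphabet `A`: every infinite sequence over `A` has an initial segment in
`W`. -/
def IsBar (A : Finset ℕ) (W : Set (List ℕ)) : Prop :=
  ∀ s : Stream' ℕ, (∀ a ∈ s, a ∈ A) → ∃ n, s.take n ∈ W

section Concatenation

variable {ι α : Type*} {f : ι → List α}

theorem le_length_flatMap_take (hf : ∀ i, f i ≠ []) (s : Stream' ι) (n : ℕ) :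
    n ≤ ((s.take n).flatMap f).length := by
  induction n with
  | zero => exact Nat.zero_le _
  | succ n ih =>
    rw [Stream'.take_succ', List.flatMap_append, List.flatMap_singleton, List.length_append]
    exact Nat.add_le_add ih (List.length_pos_of_ne_nil (hf _))

/-- The infinite concatenation `f s₀ ++ f s₁ ++ …`. The words `f i` are nonempty, so that the `n`-th
letter already occurs in the first `n + 1` of them. -/
def streamFlatMap (f : ι → List α) (hf : ∀ i, f i ≠ []) (s : Stream' ι) : Stream' α :=
  fun n => ((s.take (n + 1)).flatMap f)[n]'(le_length_flatMap_take hf s (n + 1))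

theorem streamFlatMap_cons (hf : ∀ i, f i ≠ []) (i : ι) (s : Stream' ι) :
    streamFlatMap f hf (i :: s) = f i ++ₛ streamFlatMap f hf s := by
  ext n
  rcases lt_or_ge n (f i).length with hn | hn
  · rw [Stream'.get_append_left n (f i) _ hn]
    simp [streamFlatMap, Stream'.get, List.getElem_append_left hn]
  · obtain ⟨k, rfl⟩ := Nat.exists_eq_add_of_le hn
    have hlen := List.length_pos_of_ne_nil (hf i)
    have hprefix : (s.take (k + 1)).flatMap f <+: (s.take ((f i).length + k)).flatMap f :=
      List.IsPrefix.flatMap (Stream'.take_prefix_take_left _ _ _ (by omega)) f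
    rw [Stream'.get_append_right]
    simp [streamFlatMap, Stream'.get, hprefix.getElem]

theorem exists_mem_of_mem_streamFlatMap {hf : ∀ i, f i ≠ []} {s : Stream' ι} {a : α}
    (ha : a ∈ streamFlatMap f hf s) : ∃ i, a ∈ f i := by
  obtain ⟨n, rfl⟩ := Stream'.mem_iff_exists_get_eq.1 ha
  obtain ⟨i, -, hi⟩ := List.mem_flatMap.1
    (List.getElem_mem (le_length_flatMap_take hf s (n + 1)))
  exact ⟨i, hi⟩

theorem cfLim_streamFlatMap_cons {f : ι → List ℕ} (hf : ∀ i, f i ≠ [])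
    (hpos : ∀ i, ∀ d ∈ f i, 0 < d) (i : ι) (s : Stream' ι) :
    cfLim (streamFlatMap f hf (i :: s)) = cfMap (f i) (cfLim (streamFlatMap f hf s)) := by
  rw [streamFlatMap_cons, cfLim_append (hpos i) fun d hd => ?_]
  obtain ⟨j, hj⟩ := exists_mem_of_mem_streamFlatMap hd
  exact hpos j d hj

theorem le_dimH_range_cfLim_streamFlatMap [Fintype ι] {f : ι → List ℕ} {t : ℝ≥0}
    (hf : ∀ i, f i ≠ []) (hpos : ∀ i, ∀ d ∈ f i, 0 < d) (hanti : ∀ i j, i ≠ j → ¬ f i <+: f j)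
    (ht : 0 < t) (hsum : 1 ≤ ∑ i, (contAt (f i) 1 ^ 2)⁻¹ ^ (t : ℝ)) :
    (t : ℝ≥0∞) ≤ dimH (Set.range fun s => cfLim (streamFlatMap f hf s)) := by
  obtain ⟨M, hM⟩ := (Finset.univ.biUnion fun i => (f i).toFinset).bddAbove
  obtain ⟨L, hL⟩ := (Set.finite_range fun i => (f i).length).bddAbove
  have hIcc (i : ι) : ∀ d ∈ f i, d ∈ Set.Icc 1 M := fun d hd =>
    ⟨hpos i d hd, hM (by simpa using ⟨i, hd⟩)⟩
  have hlim (s : Stream' ι) : cfLim (streamFlatMap f hf s) ∈ Set.Icc ((M + 1 : ℝ)⁻¹) 1 :=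
    cfLim_mem_Icc_inv fun d hd => have ⟨i, hi⟩ := exists_mem_of_mem_streamFlatMap hd; hIcc i d hi
  refine le_dimH_range_of_one_le_sum_rpow (κ := ((M + 1 : ℝ)⁻¹) ^ (2 * L + 1)) (fun i => ?_)
    (by positivity) ht (fun i s s' => ?_) (fun i j s s' hij => ?_) hsum
  · have := two_le_contAt_one (hpos i) (hf i)
    exact ⟨by positivity, inv_lt_one_of_one_lt₀ (by nlinarith)⟩
  · have hIcc₀ : Set.Icc ((M + 1 : ℝ)⁻¹) 1 ⊆ Set.Icc 0 1 :=
      Set.Icc_subset_Icc_left (by positivity)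
    rw [cfLim_streamFlatMap_cons hf hpos, cfLim_streamFlatMap_cons hf hpos]
    exact le_dist_cfMap (hpos i) (hIcc₀ (hlim s)) (hIcc₀ (hlim s'))
  · rw [cfLim_streamFlatMap_cons hf hpos, cfLim_streamFlatMap_cons hf hpos]
    have hlen : (f i).length ≤ L := hL ⟨i, rfl⟩
    exact (pow_le_pow_of_le_one (by positivity) (inv_le_one_of_one_le₀ (by simp)) (by omega)).trans
      (inv_pow_le_dist_cfMap (hIcc i) (hIcc j) (hanti i j hij) (hanti j i hij.symm)
        (hlim s) (hlim s'))

end Concatenation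

section Dimension

variable {A : Finset ℕ} {W : Finset (List ℕ)} {t : ℝ}

theorem cfSet_subset_Icc (hA : ∀ a ∈ A, 0 < a) : cfSet A ⊆ Set.Icc 0 1 := by
  intro x hx
  obtain ⟨s, hs, rfl⟩ := (mem_cfSet_iff hA).1 hx
  exact cfLim_mem_Icc fun d hd => hA d (hs d hd)

theorem dimH_real_le_one (E : Set ℝ) : dimH E ≤ 1 :=
  Real.dimH_univ ▸ dimH_mono (Set.subset_univ E)

theorem hdim_le_one (A : Finset ℕ) : hdim A ≤ 1 :=
  ENNReal.toReal_le_of_le_ofReal zero_le_one (by simpa using dimH_real_le_one (cfSet A))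

theorem hdim_le_of_isBar (hA : ∀ a ∈ A, 0 < a) (hW : ↑W ⊆ words A) (hbar : IsBar A W)
    (ht : 0 < t) (hsum : ∑ w ∈ W, ((cont w : ℝ) ^ 2)⁻¹ ^ t < 1) : hdim A ≤ t := by
  lift t to ℝ≥0 using ht.le
  have hpos (w : W) : ∀ d ∈ (w : List ℕ), 0 < d := fun d hd => hA d ((hW w.2).2 d hd)
  let ρ (w : W) : ℝ≥0 := ((cont w : ℝ≥0) ^ 2)⁻¹
  have hlip (w : W) : LipschitzOnWith (ρ w) (cfMap w) (cfSet A) :=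
    LipschitzOnWith.of_dist_le_mul fun x hx y hy => by
      simpa [ρ] using dist_cfMap_le (hpos w) (cfSet_subset_Icc hA hx).1 (cfSet_subset_Icc hA hy).1
  have hcover : cfSet A ⊆ ⋃ w : W, cfMap w '' cfSet A := by
    intro x hx
    obtain ⟨s, hs, rfl⟩ := (mem_cfSet_iff hA).1 hx
    obtain ⟨n, hn⟩ := hbar s hs
    have hdrop : ∀ a ∈ s.drop n, a ∈ A := fun a ha => hs a (mem_of_mem_stream_drop ha)
    refine Set.mem_iUnion.2 ⟨⟨s.take n, hn⟩, cfLim (s.drop n),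
      (mem_cfSet_iff hA).2 ⟨_, hdrop, rfl⟩, ?_⟩
    rw [← cfLim_append (hpos ⟨_, hn⟩) fun d hd => hA d (hdrop d hd), Stream'.append_take_drop]
  have hbounded : Bornology.IsBounded (cfSet A) :=
    (Metric.isBounded_Icc 0 1).subset (cfSet_subset_Icc hA)
  have hsum' : ∑ w, ρ w ^ (t : ℝ) < 1 := by
    rw [← W.sum_coe_sort] at hsum
    rw [← NNReal.coe_lt_one]
    simpa [ρ] using hsum
  exact ENNReal.toReal_le_coe_of_le_coe <| dimH_le_of_subset_iUnion_image ht
    hbounded.ediam_ne_top hlip hcover hsum'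

theorem le_hdim_of_isAntichain (hA : ∀ a ∈ A, 0 < a) (hW : ↑W ⊆ words A)
    (hanti : IsAntichain (· <+: ·) (W : Set (List ℕ))) (ht : 0 < t)
    (hsum : 1 ≤ ∑ w ∈ W, (contAt w 1 ^ 2)⁻¹ ^ t) : t ≤ hdim A := by
  lift t to ℝ≥0 using ht.le
  have hne (w : W) : (w : List ℕ) ≠ [] := (hW w.2).1
  have hle : (t : ℝ≥0∞) ≤ dimH (Set.range fun s => cfLim (streamFlatMap Subtype.val hne s)) :=
    le_dimH_range_cfLim_streamFlatMap hne (fun w d hd => hA d ((hW w.2).2 d hd))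
      (fun w v hwv => hanti w.2 v.2 (Subtype.coe_injective.ne hwv)) ht
      (by rwa [← W.sum_coe_sort] at hsum)
  have hrange : (Set.range fun s => cfLim (streamFlatMap Subtype.val hne s)) ⊆ cfSet A := by
    rintro _ ⟨s, rfl⟩
    refine (mem_cfSet_iff hA).2 ⟨_, fun a ha => ?_, rfl⟩
    obtain ⟨w, hw⟩ := exists_mem_of_mem_streamFlatMap ha
    exact (hW w.2).2 a hw
  have hfinite : dimH (cfSet A) ≠ ∞ := ne_top_of_le_ne_top ENNReal.one_ne_top (dimH_real_le_one _)
  rw [← ENNReal.coe_toReal, hdim]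
  exact ENNReal.toReal_mono hfinite (hle.trans (dimH_mono hrange))

theorem one_le_sum_of_isBar (hA : ∀ a ∈ A, 0 < a) (hδ : 0 < hdim A) (hW : ↑W ⊆ words A)
    (hbar : IsBar A W) : 1 ≤ ∑ w ∈ W, ((cont w : ℝ) ^ 2)⁻¹ ^ hdim A := by
  have hpos {w : List ℕ} (hw : w ∈ W) : 0 < (cont w : ℝ) :=
    cont_pos fun d hd => hA d ((hW hw).2 d hd)
  have hcont : Continuous fun t : ℝ => ∑ w ∈ W, ((cont w : ℝ) ^ 2)⁻¹ ^ t :=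
    continuous_finsetSum _ fun w hw =>
      Real.continuous_const_rpow (inv_pos.2 (pow_pos (hpos hw) 2)).ne'
  refine ge_of_tendsto (hcont.continuousWithinAt (s := Set.Iio (hdim A))) ?_
  filter_upwards [Ioo_mem_nhdsLT hδ] with t ht
  exact not_lt.1 fun hlt => (hdim_le_of_isBar hA hW hbar ht.1 hlt).not_gt ht.2

theorem sum_le_one_of_isAntichain (hA : ∀ a ∈ A, 0 < a) (hW : ↑W ⊆ words A)
    (hanti : IsAntichain (· <+: ·) (W : Set (List ℕ))) :
    ∑ w ∈ W, (contAt w 1 ^ 2)⁻¹ ^ hdim A ≤ 1 := by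
  have hpos {w : List ℕ} (hw : w ∈ W) : 0 < contAt w 1 :=
    contAt_pos (fun d hd => hA d ((hW hw).2 d hd)) zero_le_one
  have hcont : Continuous fun t : ℝ => ∑ w ∈ W, (contAt w 1 ^ 2)⁻¹ ^ t :=
    continuous_finsetSum _ fun w hw =>
      Real.continuous_const_rpow (inv_pos.2 (pow_pos (hpos hw) 2)).ne'
  refine le_of_tendsto (hcont.continuousWithinAt (s := Set.Ioi (hdim A))) ?_
  filter_upwards [self_mem_nhdsWithin] with t (ht : hdim A < t)
  have ht₀ : 0 < t := ENNReal.toReal_nonneg.trans_lt ht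
  exact not_lt.1 fun hlt => (le_hdim_of_isAntichain hA hW hanti ht₀ hlt.le).not_gt ht

theorem hdim_pos (hA : ∀ a ∈ A, 0 < a) (hcard : 2 ≤ A.card) : 0 < hdim A := by
  by_contra! hδ
  have hδ₀ : hdim A = 0 := hδ.antisymm ENNReal.toReal_nonneg
  have hinj : Function.Injective fun a : ℕ => [a] := List.singleton_injective
  have hsum := sum_le_one_of_isAntichain (W := A.map ⟨_, hinj⟩) hA
    (fun w hw => by
      obtain ⟨a, ha, rfl⟩ := Finset.mem_map.1 hw
      simpa [words] using ha)
    (fun w hw v hv hwv hpre => by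
      obtain ⟨a, -, rfl⟩ := Finset.mem_map.1 hw
      obtain ⟨b, -, rfl⟩ := Finset.mem_map.1 hv
      exact hwv (hpre.eq_of_length rfl))
  have : A.card ≤ 1 := by simpa [hδ₀] using hsum
  omega

end Dimension

/-! ### Counting words -/

section Counting

variable {A : Finset ℕ} {W : Set (List ℕ)} {M : ℕ} {x y : ℝ}

theorem words_pos (hA : ∀ a ∈ A, 0 < a) {w : List ℕ} (hw : w ∈ words A) : ∀ d ∈ w, 0 < d :=
  fun d hd => hA d (hw.2 d hd)

theorem finite_words_cont_le (hA : ∀ a ∈ A, 0 < a) (x : ℝ) :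
    {w ∈ words A | (cont w : ℝ) ≤ x}.Finite := by
  obtain ⟨N, hN⟩ := exists_nat_ge (2 * x)
  refine ((List.finite_length_le A N).image (List.map Subtype.val)).subset ?_
  rintro w ⟨hw, hwx⟩
  have hlen : w.length ≤ N := by
    have : (w.length : ℝ) < 2 * cont w := mod_cast length_lt_two_mul_cont (words_pos hA hw)
    exact_mod_cast (show (w.length : ℝ) ≤ N by linarith)
  lift w to List A using hw.2
  exact ⟨w, by simpa using hlen, rfl⟩

theorem FF_eq_ncard (A : Finset ℕ) (x : ℝ) :
    FF A x = {w ∈ words A | (cont w : ℝ) ≤ x}.ncard := by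
  simp only [FF, words, Set.mem_ofPred_eq, and_assoc]

theorem FF_mono (hA : ∀ a ∈ A, 0 < a) : Monotone (FF A) := fun x y hxy => by
  rw [FF_eq_ncard, FF_eq_ncard]
  exact Set.ncard_le_ncard (fun w hw => ⟨hw.1, hw.2.trans hxy⟩) (finite_words_cont_le hA y)

theorem inv_sq_rpow {z : ℝ} (hz : 0 ≤ z) (r : ℝ) : (z ^ 2)⁻¹ ^ r = (z ^ (2 * r))⁻¹ := by
  rw [Real.inv_rpow (by positivity), Real.rpow_mul hz, Real.rpow_two]

theorem ncard_le_of_isAntichain (hA : ∀ a ∈ A, 0 < a) (hW : W ⊆ words A)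
    (hanti : IsAntichain (· <+: ·) W) (hy : 0 < y) (hWy : ∀ w ∈ W, contAt w 1 ≤ y) :
    (W.ncard : ℝ) ≤ y ^ (2 * hdim A) := by
  have hfin : W.Finite := (finite_words_cont_le hA y).subset fun w hw =>
    ⟨hW hw, (cont_le_contAt_one w).trans (hWy w hw)⟩
  lift W to Finset (List ℕ) using hfin
  have hδ : 0 ≤ hdim A := ENNReal.toReal_nonneg
  rw [Set.ncard_coe_finset]
  have hsum : W.card * (y ^ (2 * hdim A))⁻¹ ≤ 1 := by
    rw [← nsmul_eq_mul]
    refine (W.card_nsmul_le_sum _ _ fun w hw => ?_).trans (sum_le_one_of_isAntichain hA hW hanti)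
    have hpos := contAt_pos (words_pos hA (hW hw)) zero_le_one
    rw [inv_sq_rpow hpos.le]
    gcongr
    exact hWy w hw
  rwa [← div_eq_mul_inv, div_le_one (by positivity)] at hsum

theorem le_ncard_of_isBar (hA : ∀ a ∈ A, 0 < a) (hδ : 0 < hdim A) (hW : W ⊆ words A)
    (hfin : W.Finite) (hbar : IsBar A W) (hy : 0 < y) (hWy : ∀ w ∈ W, y ≤ cont w) :
    y ^ (2 * hdim A) ≤ W.ncard := by
  lift W to Finset (List ℕ) using hfin
  rw [Set.ncard_coe_finset]
  have hsum : 1 ≤ W.card * (y ^ (2 * hdim A))⁻¹ := by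
    rw [← nsmul_eq_mul]
    refine (one_le_sum_of_isBar hA hδ hW hbar).trans (W.sum_le_card_nsmul _ _ fun w hw => ?_)
    rw [inv_sq_rpow (Nat.cast_nonneg _)]
    gcongr
    exact hWy w hw
  rwa [← div_eq_mul_inv, one_le_div (by positivity)] at hsum

theorem isAntichain_dyadic_layer (hA : ∀ a ∈ A, 0 < a) (y : ℝ) (i : ℕ) :
    IsAntichain (· <+: ·) {w ∈ words A | contAt w 1 ∈ Set.Ioc (y / 2) y ∧ w.length % 2 = i} := by
  rintro w ⟨-, ⟨hyw, -⟩, hwi⟩ _ ⟨hwu, ⟨-, hwuy⟩, hwui⟩ hne ⟨u, rfl⟩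
  have hpos := List.forall_mem_append.1 (words_pos hA hwu)
  have hlen : u.length ≠ 0 := fun h => hne (by simp [List.length_eq_zero_iff.1 h])
  rw [List.length_append] at hwui
  have := two_mul_contAt_one_le_append hpos.1 hpos.2 (by omega)
  linarith

theorem ncard_dyadic_layer_le (hA : ∀ a ∈ A, 0 < a) (hy : 0 < y) :
    ({w ∈ words A | contAt w 1 ∈ Set.Ioc (y / 2) y}.ncard : ℝ) ≤ 2 * y ^ (2 * hdim A) := by
  let layer (i : ℕ) := {w ∈ words A | contAt w 1 ∈ Set.Ioc (y / 2) y ∧ w.length % 2 = i}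
  have hlayer (i : ℕ) : ((layer i).ncard : ℝ) ≤ y ^ (2 * hdim A) :=
    ncard_le_of_isAntichain hA (Set.sep_subset _ _) (isAntichain_dyadic_layer hA y i) hy
      fun _ hw => hw.2.1.2
  have hunion : {w ∈ words A | contAt w 1 ∈ Set.Ioc (y / 2) y} = layer 0 ∪ layer 1 := by
    ext w
    have := Nat.mod_two_eq_zero_or_one w.length
    simp only [layer, Set.mem_union, Set.mem_ofPred_eq]
    tauto
  calc _ ≤ ((layer 0).ncard + (layer 1).ncard : ℝ) := by
        rw [hunion]; exact_mod_cast Set.ncard_union_le _ _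
    _ ≤ 2 * y ^ (2 * hdim A) := by linarith [hlayer 0, hlayer 1]

theorem ncard_contAt_one_le (hA : ∀ a ∈ A, 0 < a) (hδ : 0 < hdim A) (hy : 0 < y) :
    ({w ∈ words A | contAt w 1 ≤ y}.ncard : ℝ) ≤
      2 / (1 - 2 ^ (-(2 * hdim A))) * y ^ (2 * hdim A) := by
  have hq : (2 : ℝ) ^ (-(2 * hdim A)) < 1 :=
    Real.rpow_lt_one_of_one_lt_of_neg one_lt_two (by linarith)
  obtain ⟨n, hn⟩ := pow_unbounded_of_one_lt y one_lt_two
  induction n generalizing y with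
  | zero =>
    have hempty : {w ∈ words A | contAt w 1 ≤ y} = ∅ :=
      Set.eq_empty_of_forall_notMem fun w ⟨hw, hwy⟩ => by
        linarith [two_le_contAt_one (words_pos hA hw) hw.1]
    have := sub_pos.2 hq
    rw [hempty, Set.ncard_empty, Nat.cast_zero]
    positivity
  | succ n ih =>
    have hunion : {w ∈ words A | contAt w 1 ≤ y} =
        {w ∈ words A | contAt w 1 ≤ y / 2} ∪ {w ∈ words A | contAt w 1 ∈ Set.Ioc (y / 2) y} := by
      rw [← Set.sep_or]
      ext w
      simp only [← Set.mem_Iic, ← Set.mem_union, Set.Iic_union_Ioc_eq_Iic (half_le_self hy.le)]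
    have hhalf : (y / 2) ^ (2 * hdim A) = 2 ^ (-(2 * hdim A)) * y ^ (2 * hdim A) := by
      rw [Real.div_rpow hy.le zero_le_two, Real.rpow_neg zero_le_two, div_eq_inv_mul]
    calc ({w ∈ words A | contAt w 1 ≤ y}.ncard : ℝ)
        ≤ {w ∈ words A | contAt w 1 ≤ y / 2}.ncard +
            {w ∈ words A | contAt w 1 ∈ Set.Ioc (y / 2) y}.ncard := by
          rw [hunion]; exact_mod_cast Set.ncard_union_le _ _
      _ ≤ 2 / (1 - 2 ^ (-(2 * hdim A))) * (y / 2) ^ (2 * hdim A) + 2 * y ^ (2 * hdim A) :=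
          add_le_add (ih (half_pos hy) (by rw [pow_succ] at hn; linarith))
            (ncard_dyadic_layer_le hA hy)
      _ = 2 / (1 - 2 ^ (-(2 * hdim A))) * y ^ (2 * hdim A) := by
          rw [hhalf]
          have := (sub_pos.2 hq).ne'
          field_simp
          ring

theorem ncard_cont_le_lt_contAt_one_le (hA : ∀ a ∈ A, 0 < a) (hx : 0 < x) :
    ({w ∈ words A | cont w ≤ x ∧ x < contAt w 1}.ncard : ℝ) ≤ (2 * x) ^ (2 * hdim A) := by
  refine ncard_le_of_isAntichain hA (Set.sep_subset _ _) ?_ (by positivity) ?_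
  · rintro w ⟨-, -, hxw⟩ _ ⟨hwu, hwux, -⟩ hne ⟨u, rfl⟩
    have hpos := List.forall_mem_append.1 (words_pos hA hwu)
    have hu : u ≠ [] := fun h => hne (by simp [h])
    exact ((contAt_one_le_cont_append hpos.1 hpos.2 hu).trans hwux).not_gt hxw
  · rintro w ⟨hw, hwx, -⟩
    exact (contAt_one_le_two_mul_cont (words_pos hA hw)).trans (by linarith)

theorem FF_le_mul_rpow (hA : ∀ a ∈ A, 0 < a) (hδ : 0 < hdim A) (hx : 0 < x) :
    (FF A x : ℝ) ≤ (2 / (1 - 2 ^ (-(2 * hdim A))) + 2 ^ (2 * hdim A)) * x ^ (2 * hdim A) := by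
  have hunion : {w ∈ words A | (cont w : ℝ) ≤ x} =
      {w ∈ words A | contAt w 1 ≤ x} ∪ {w ∈ words A | cont w ≤ x ∧ x < contAt w 1} := by
    ext w
    have := cont_le_contAt_one w
    simp only [Set.mem_union, Set.mem_ofPred_eq]
    grind
  rw [FF_eq_ncard, hunion, add_mul, ← Real.mul_rpow zero_le_two hx.le]
  calc _ ≤ (({w ∈ words A | contAt w 1 ≤ x}.ncard +
        {w ∈ words A | cont w ≤ x ∧ x < contAt w 1}.ncard : ℕ) : ℝ) :=
        Nat.cast_le.2 (Set.ncard_union_le _ _)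
    _ ≤ _ := by
        rw [Nat.cast_add]
        exact add_le_add (ncard_contAt_one_le hA hδ hx) (ncard_cont_le_lt_contAt_one_le hA hx)

theorem isBar_cont_mem_Ioc (hA : ∀ a ∈ A, 0 < a) (hM : ∀ a ∈ A, a ≤ M) (hx : M ≤ x) :
    IsBar A {w ∈ words A | (cont w : ℝ) ∈ Set.Ioc (x / (M + 1)) x} := by
  intro s hs
  have hmem (n : ℕ) : ∀ d ∈ s.take n, d ∈ A := fun d hd => hs d (mem_of_mem_stream_take hd)
  have hpos (n : ℕ) : ∀ d ∈ s.take n, 0 < d := fun d hd => hA d (hmem n d hd)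
  have hexit : ∃ n, x < cont (s.take (n + 1)) := by
    obtain ⟨N, hN⟩ := exists_nat_ge (2 * x)
    have hlen : (N : ℝ) + 1 < 2 * cont (s.take (N + 1)) := by
      have := length_lt_two_mul_cont (hpos (N + 1))
      rw [Stream'.length_take] at this
      exact_mod_cast this
    exact ⟨N, by linarith⟩
  have hfirst : ¬ x < cont (s.take (0 + 1)) := by
    have hhead : (s.head : ℝ) ≤ M := mod_cast hM _ (hmem 1 _ (by simp [Stream'.take]))
    simpa [Stream'.take, cont] using hhead.trans hx
  obtain ⟨n, hn, hn'⟩ := Nat.exists_not_and_succ_of_not_zero_of_exists hfirst hexit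
  refine ⟨n + 1, ⟨List.ne_nil_of_length_pos (by simp), hmem _⟩, ?_, not_lt.1 hn⟩
  have hmem' : s.get (n + 1) ∈ A := hs _ (Stream'.mem_of_get_eq rfl)
  have hle : (s.get (n + 1) : ℝ) ≤ M := mod_cast hM _ hmem'
  rw [div_lt_iff₀ (by positivity), mul_comm]
  calc x < cont (s.take (n + 1) ++ [s.get (n + 1)]) := by rwa [← Stream'.take_succ']
    _ ≤ (s.get (n + 1) + 1) * cont (s.take (n + 1)) := cont_concat_le (hpos _) (hA _ hmem')
    _ ≤ (M + 1) * cont (s.take (n + 1)) := by gcongr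

theorem FF_sub_FF_eq_ncard (hA : ∀ a ∈ A, 0 < a) (hyx : y ≤ x) :
    (FF A x : ℝ) - FF A y = {w ∈ words A | (cont w : ℝ) ∈ Set.Ioc y x}.ncard := by
  have hdiff : {w ∈ words A | (cont w : ℝ) ∈ Set.Ioc y x} =
      {w ∈ words A | (cont w : ℝ) ≤ x} \ {w ∈ words A | (cont w : ℝ) ≤ y} := by
    ext w
    simp only [Set.mem_ofPred_eq, Set.mem_sdiff, Set.mem_Ioc, ← not_le]
    tauto
  have hsub : {w ∈ words A | (cont w : ℝ) ≤ y} ⊆ {w ∈ words A | (cont w : ℝ) ≤ x} :=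
    fun w hw => ⟨hw.1, hw.2.trans hyx⟩
  rw [hdiff, FF_eq_ncard, FF_eq_ncard,
    Set.cast_ncard_sdiff hsub (finite_words_cont_le hA x)]

theorem rpow_le_FF_sub_FF (hA : ∀ a ∈ A, 0 < a) (hδ : 0 < hdim A) (hM : ∀ a ∈ A, a ≤ M)
    (hx : 0 < x) (hMx : M ≤ x) :
    (x / (M + 1)) ^ (2 * hdim A) ≤ (FF A x : ℝ) - FF A (x / (M + 1)) := by
  rw [FF_sub_FF_eq_ncard hA (div_le_self hx.le (by simp))]
  exact le_ncard_of_isBar hA hδ (Set.sep_subset _ _)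
    ((finite_words_cont_le hA x).subset fun w hw => ⟨hw.1, hw.2.2⟩)
    (isBar_cont_mem_Ioc hA hM hMx) (by positivity) fun w hw => hw.2.1.le

end Counting

theorem two_div_add_two_rpow_le_eight {δ : ℝ} (hδ : 1 / 2 ≤ δ) (hδ' : δ ≤ 1) :
    2 / (1 - 2 ^ (-(2 * δ))) + 2 ^ (2 * δ) ≤ (8 : ℝ) := by
  have hq : (2 : ℝ) ^ (-(2 * δ)) ≤ 1 / 2 :=
    calc (2 : ℝ) ^ (-(2 * δ)) ≤ 2 ^ (-1 : ℝ) := by gcongr <;> linarith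
      _ = 1 / 2 := by rw [Real.rpow_neg_one, one_div]
  have hlayers : 2 / (1 - 2 ^ (-(2 * δ))) ≤ (4 : ℝ) := by
    rw [div_le_iff₀] <;> linarith
  have hrest : (2 : ℝ) ^ (2 * δ) ≤ 4 :=
    calc (2 : ℝ) ^ (2 * δ) ≤ 2 ^ (2 : ℝ) := by gcongr <;> linarith
      _ = 4 := by norm_num
  linarith

theorem inv_mul_rpow_le_div_add_one_rpow {δ M x : ℝ} (hδ : δ ≤ 1) (hM : 1 ≤ M) (hx : 0 ≤ x) :
    1 / (32 * M ^ 4) * x ^ (2 * δ) ≤ (x / (M + 1)) ^ (2 * δ) := by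
  have hconst : (M + 1) ^ (2 * δ) ≤ 32 * M ^ 4 :=
    calc (M + 1) ^ (2 * δ) ≤ (M + 1) ^ (2 : ℝ) := by gcongr <;> linarith
      _ = (M + 1) ^ 2 := Real.rpow_two _
      _ ≤ (M + M) ^ 2 := by gcongr
      _ ≤ 32 * M ^ 2 := by nlinarith
      _ ≤ 32 * M ^ 4 := by gcongr; norm_num
  rw [Real.div_rpow hx (by linarith), one_div_mul_eq_div]
  gcongr

theorem hensley_bounds_general (A : Finset ℕ) (hpos : ∀ a ∈ A, 0 < a) (hcard : 2 ≤ A.card)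
    (Amax : ℕ) (hub : ∀ a ∈ A, a ≤ Amax) (x : ℝ) (hx : Amax ≤ x) :
    (1 / (32 * (Amax : ℝ) ^ 4)) * x ^ (2 * hdim A) ≤
        (FF A x : ℝ) - (FF A (x / (4 * (Amax : ℝ) ^ 2)) : ℝ) ∧
    (FF A x : ℝ) ≤ (2 / (1 - 2 ^ (-(2 * hdim A))) + 2 ^ (2 * hdim A)) * x ^ (2 * hdim A) := by
  have hδ := hdim_pos hpos hcard
  obtain ⟨a, ha⟩ := Finset.card_pos.1 (two_pos.trans_le hcard)
  have hM : (1 : ℝ) ≤ Amax := mod_cast (hpos a ha).trans_le (hub a ha)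
  have hx₀ : 0 < x := by linarith
  have hmono : FF A (x / (4 * (Amax : ℝ) ^ 2)) ≤ FF A (x / (Amax + 1)) :=
    FF_mono hpos (by gcongr; nlinarith)
  refine ⟨?_, FF_le_mul_rpow hpos hδ hx₀⟩
  calc (1 / (32 * (Amax : ℝ) ^ 4)) * x ^ (2 * hdim A)
      ≤ (x / (Amax + 1)) ^ (2 * hdim A) :=
        inv_mul_rpow_le_div_add_one_rpow (hdim_le_one A) hM hx₀.le
    _ ≤ (FF A x : ℝ) - FF A (x / (Amax + 1)) := rpow_le_FF_sub_FF hpos hδ hub hx₀ hx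
    _ ≤ (FF A x : ℝ) - FF A (x / (4 * (Amax : ℝ) ^ 2)) := by gcongr

theorem hensley_bounds
    (A : Finset ℕ) (hpos : ∀ a ∈ A, 0 < a) (hcard : 2 ≤ A.card)
    (Amax : ℕ) (hmem : Amax ∈ A) (hub : ∀ a ∈ A, a ≤ Amax)
    (hδ : 1/2 < hdim A)
    (x : ℝ) (hx : 4 * (Amax : ℝ)^2 ≤ x) :
    (1 / (32 * (Amax : ℝ)^4)) * x ^ (2 * hdim A) ≤
        (FF A x : ℝ) - (FF A (x / (4 * (Amax : ℝ)^2)) : ℝ) ∧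
    (FF A x : ℝ) - (FF A (x / (4 * (Amax : ℝ)^2)) : ℝ) ≤ (FF A x : ℝ) ∧
    (FF A x : ℝ) ≤ 8 * x ^ (2 * hdim A) := by
  have hM : (1 : ℝ) ≤ Amax := mod_cast hpos Amax hmem
  obtain ⟨hlower, hupper⟩ :=
    hensley_bounds_general A hpos hcard Amax hub x (hx.trans' (by nlinarith))
  have hx₀ : 0 ≤ x := hx.trans' (by positivity)
  exact ⟨hlower, sub_le_self _ (Nat.cast_nonneg _), hupper.trans <|
    mul_le_mul_of_nonneg_right (two_div_add_two_rpow_le_eight hδ.le (hdim_le_one A))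
      (Real.rpow_nonneg hx₀ _)⟩

end
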